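/- The set of unstratified well-formed formulae of set theory is not context-free. -/

import Mathlib

/-- Alphabet of the usual syntax of set theory. -/
inductive Alph : Type
  | lb | rb | imp | all | deq | mem | w | prime | bot
deriving DecidableEq

/-- Well-formed formulae of set theory; variables are naturals (number of primes). -/
inductive Fm : Type
  | bot : Fm
  | eq : ℕ → ℕ → Fm
  | mem : ℕ → ℕ → Fm
  | imp : Fm → Fm → Fm
  | all : ℕ → Fm → Fm
deriving DecidableEq

/-- The string `w'^n` for the variable with `n` primes. -/
def varStr (n : ℕ) : List Alph := Alph.w :: List.replicate n Alph.prime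

/-- The string of symbols of a formula. -/
def Fm.str : Fm → List Alph
  | .bot => [Alph.bot]
  | .eq x y => varStr x ++ [Alph.deq] ++ varStr y
  | .mem x y => varStr x ++ [Alph.mem] ++ varStr y
  | .imp φ ψ => [Alph.lb] ++ φ.str ++ [Alph.imp] ++ ψ.str ++ [Alph.rb]
  | .all x φ => [Alph.lb, Alph.all] ++ varStr x ++ [Alph.rb] ++ φ.str

/-- Pairs `(x, y)` such that `x ∈ y` occurs as an atomic subformula. -/
def Fm.memPairs : Fm → Finset (ℕ × ℕ)
  | .bot => ∅
  | .eq _ _ => ∅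
  | .mem x y => {(x, y)}
  | .imp φ ψ => φ.memPairs ∪ ψ.memPairs
  | .all _ φ => φ.memPairs

/-- Pairs `(x, y)` such that `x ≐ y` occurs as an atomic subformula. -/
def Fm.eqPairs : Fm → Finset (ℕ × ℕ)
  | .bot => ∅
  | .eq x y => {(x, y)}
  | .mem _ _ => ∅
  | .imp φ ψ => φ.eqPairs ∪ ψ.eqPairs
  | .all _ φ => φ.eqPairs

/-- A formula is stratified if some integer assignment to variables satisfies
`σ x = σ y - 1` for subformulae `x ∈ y` and `σ x = σ y` for subformulae `x ≐ y`. -/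
def Fm.Stratified (φ : Fm) : Prop :=
  ∃ σ : ℕ → ℤ, (∀ p ∈ φ.memPairs, σ p.1 = σ p.2 - 1) ∧ (∀ p ∈ φ.eqPairs, σ p.1 = σ p.2)

/-- Big-step derivation relation of a context-free grammar. -/
inductive Yld {T : Type} (g : ContextFreeGrammar T) : List (Symbol T g.NT) → List T → Prop
  | nil : Yld g [] []
  | term (t : T) {α : List (Symbol T g.NT)} {v : List T} (h : Yld g α v) :
      Yld g (Symbol.terminal t :: α) (t :: v)
  | nt (r : ContextFreeRule T g.NT) (hr : r ∈ g.rules) {α : List (Symbol T g.NT)} {v₁ v₂ : List T}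
      (h₁ : Yld g r.output v₁) (h₂ : Yld g α v₂) :
      Yld g (Symbol.nonterminal r.input :: α) (v₁ ++ v₂)

theorem Yld.split {T : Type} {g : ContextFreeGrammar T} (α : List (Symbol T g.NT)) :
    ∀ (β : List (Symbol T g.NT)) (v : List T), Yld g (α ++ β) v →
      ∃ v₁ v₂, v = v₁ ++ v₂ ∧ Yld g α v₁ ∧ Yld g β v₂ := by
  induction α with
  | nil => intro β v h; exact ⟨[], v, rfl, .nil, h⟩
  | cons x α ih =>
    intro β v h
    rw [List.cons_append] at h
    cases h with
    | term t h =>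
      obtain ⟨v₁, v₂, rfl, h₁, h₂⟩ := ih _ _ h
      exact ⟨t :: v₁, v₂, rfl, .term t h₁, h₂⟩
    | nt r hr h₁ h₂ =>
      obtain ⟨v₁, v₂, rfl, h₃, h₄⟩ := ih _ _ h₂
      exact ⟨_ ++ v₁, v₂, by simp, .nt r hr h₁ h₃, h₄⟩

theorem Yld.of_rewrites {T : Type} {g : ContextFreeGrammar T} {r : ContextFreeRule T g.NT}
    (hr : r ∈ g.rules) {α β : List (Symbol T g.NT)} (h : r.Rewrites α β) :
    ∀ v, Yld g β v → Yld g α v := by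
  induction h with
  | head s =>
    intro v hv
    obtain ⟨v₁, v₂, rfl, h₁, h₂⟩ := Yld.split _ _ _ hv
    exact .nt r hr h₁ h₂
  | cons x _ ih =>
    intro v hv
    cases hv with
    | term t h => exact .term t (ih _ h)
    | nt r' hr' h₁ h₂ => exact .nt r' hr' h₁ (ih _ h₂)

theorem Yld.terminals {T : Type} {g : ContextFreeGrammar T} (v : List T) :
    Yld g (v.map Symbol.terminal) v := by
  induction v with
  | nil => exact .nil
  | cons t v ih => exact .term t ih

theorem Yld.of_derives {T : Type} {g : ContextFreeGrammar T} {α : List (Symbol T g.NT)}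
    {v : List T} (h : g.Derives α (v.map Symbol.terminal)) : Yld g α v := by
  induction h using Relation.ReflTransGen.head_induction_on with
  | refl => exact Yld.terminals v
  | head h _ ih =>
    obtain ⟨r, hr, h⟩ := h
    exact Yld.of_rewrites hr h _ ih

theorem Yld.derives {T : Type} {g : ContextFreeGrammar T} {α : List (Symbol T g.NT)}
    {v : List T} (h : Yld g α v) : g.Derives α (v.map Symbol.terminal) := by
  induction h with
  | nil => exact Relation.ReflTransGen.refl
  | term t _ ih => exact ih.append_left [Symbol.terminal t]
  | @nt r hr α v₁ v₂ _ _ ih₁ ih₂ =>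
    have h0 : g.Produces (Symbol.nonterminal r.input :: α) (r.output ++ α) := ⟨r, hr, .head α⟩
    refine h0.trans_derives ?_
    rw [List.map_append]
    exact (ih₁.append_right α).trans (ih₂.append_left _)

/-- Higman: every language over a finite alphabet has finitely many sublist-minimal words. -/
theorem exists_min_bound {T : Type} [Finite T] (L : Set (List T)) :
    ∃ K : ℕ, ∀ v ∈ L, v.length ≤ K ∨ ∃ v' ∈ L, v'.Sublist v ∧ v'.length < v.length := by
  set M : Set (List T) := {v | v ∈ L ∧ ∀ v' ∈ L, v'.Sublist v → ¬ v'.length < v.length} with hM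
  have hT : (Set.univ : Set T).PartiallyWellOrderedOn (· = ·) :=
    Set.Finite.partiallyWellOrderedOn Set.finite_univ
  have hH := Set.PartiallyWellOrderedOn.partiallyWellOrderedOn_sublistForall₂ (· = ·) hT
  have hsub : ∀ a b : List T, List.SublistForall₂ (· = ·) a b → a.Sublist b := by
    intro a b h
    rw [List.sublistForall₂_iff] at h
    obtain ⟨l, h1, h2⟩ := h
    rw [List.forall₂_eq_eq_eq] at h1
    exact h1 ▸ h2
  have hfin : M.Finite := by
    refine IsAntichain.finite_of_partiallyWellOrderedOn (r := List.SublistForall₂ (· = ·)) ?_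
      (hH.mono (by intro v _ x _; trivial))
    intro a ha b hb hne hab
    have hs := hsub _ _ hab
    have h1 := hb.2 a ha.1 hs
    exact hne (hs.eq_of_length_le (by omega))
  obtain ⟨K, hK⟩ := (hfin.image List.length).bddAbove
  refine ⟨K, fun v hv => ?_⟩
  by_cases hm : v ∈ M
  · exact Or.inl (hK ⟨v, hm, rfl⟩)
  · right
    by_contra hcon
    exact hm ⟨hv, fun v' h1 h2 h3 => hcon ⟨v', h1, h2, h3⟩⟩

/-- Shrinking lemma (a consequence of the pumping lemma). -/
theorem shrinking {T : Type} [Finite T] (L : Language T) (hL : L.IsContextFree) :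
    ∃ p : ℕ, ∀ s ∈ L, p ≤ s.length → ∃ u m m' z : List T, s = u ++ m ++ z ∧ m.length ≤ p ∧
      m'.Sublist m ∧ m'.length < m.length ∧ u ++ m' ++ z ∈ L := by
  obtain ⟨g, rfl⟩ := hL
  choose KA hKA using fun A : g.NT => exists_min_bound {v : List T | Yld g [Symbol.nonterminal A] v}
  let K := g.rules.sup (fun r => KA r.input)
  let R := g.rules.sup (fun r => r.output.length)
  have main : ∀ (α : List (Symbol T g.NT)) (v : List T), Yld g α v →
      v.length ≤ (K + 1) * α.length ∨ ∃ u m m' z : List T, v = u ++ m ++ z ∧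
        m.length ≤ (K + 1) * R ∧ m'.Sublist m ∧ m'.length < m.length ∧ Yld g α (u ++ m' ++ z) := by
    intro α v h
    induction h with
    | nil => left; simp
    | term t _ ih =>
      rcases ih with ih | ⟨u, m, m', z, rfl, h1, h2, h3, h4⟩
      · left; simp only [List.length_cons]; nlinarith
      · right; exact ⟨t :: u, m, m', z, by simp, h1, h2, h3, by simpa using Yld.term t h4⟩
    | @nt r hr α v₁ v₂ y₁ y₂ ih₁ ih₂ =>
      rcases ih₁ with ih₁ | ⟨u, m, m', z, rfl, h1, h2, h3, h4⟩
      · have hR : r.output.length ≤ R := Finset.le_sup (f := fun r => r.output.length) hr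
        have hK : KA r.input ≤ K := Finset.le_sup (f := fun r => KA r.input) hr
        have hy : Yld g [Symbol.nonterminal r.input] v₁ := by simpa using Yld.nt r hr y₁ .nil
        rcases hKA r.input v₁ hy with h | ⟨v', hv', hs, hlt⟩
        · rcases ih₂ with ih₂ | ⟨u, m, m', z, rfl, h1, h2, h3, h4⟩
          · left; simp only [List.length_cons, List.length_append]; nlinarith
          · right
            exact ⟨v₁ ++ u, m, m', z, by simp, h1, h2, h3, by simpa using Yld.nt r hr y₁ h4⟩
        · right
          refine ⟨[], v₁, v', v₂, by simp, ih₁.trans (Nat.mul_le_mul_left _ hR), hs, hlt, ?_⟩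
          have hv2 : Yld g [Symbol.nonterminal r.input] v' := hv'
          generalize hβ : [Symbol.nonterminal r.input] = β at hv2
          cases hv2 with
          | nil => simp at hβ
          | term t h => simp at hβ
          | @nt r' hr' γ a b h₁ h₂ =>
            simp only [List.cons.injEq, Symbol.nonterminal.injEq] at hβ
            obtain ⟨heq, rfl⟩ := hβ
            cases h₂
            simp only [List.append_nil, List.nil_append]
            rw [heq]
            exact .nt r' hr' h₁ y₂
      · right
        exact ⟨u, m, m', z ++ v₂, by simp, h1, h2, h3, by simpa using Yld.nt r hr h4 y₂⟩
  refine ⟨(K + 1) * R + (K + 2), fun s hs hlen => ?_⟩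
  rcases main _ _ (Yld.of_derives ((g.mem_language_iff s).1 hs)) with h | ⟨u, m, m', z, h0, h1, h2, h3, h4⟩
  · simp at h; omega
  · exact ⟨u, m, m', z, h0, by omega, h2, h3, (g.mem_language_iff _).2 h4.derives⟩

instance : Finite Alph :=
  Finite.of_surjective (fun n : Fin 9 =>
    ([Alph.lb, .rb, .imp, .all, .deq, .mem, .w, .prime, .bot].get n)) (by
      intro a; cases a
      exacts [⟨0, rfl⟩, ⟨1, rfl⟩, ⟨2, rfl⟩, ⟨3, rfl⟩, ⟨4, rfl⟩, ⟨5, rfl⟩, ⟨6, rfl⟩, ⟨7, rfl⟩, ⟨8, rfl⟩])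

/-- A run of primes. -/
abbrev pr (n : ℕ) : List Alph := List.replicate n Alph.prime

theorem str_counts (φ : Fm) : φ.str.count Alph.lb = φ.str.count Alph.rb ∧
    φ.str.count Alph.imp + φ.str.count Alph.all = φ.str.count Alph.lb ∧
    φ.str.count Alph.w = 2 * (φ.str.count Alph.deq + φ.str.count Alph.mem)
      + φ.str.count Alph.all := by
  induction φ with
  | bot => simp [Fm.str]
  | eq x y => simp [Fm.str, varStr, List.count_replicate]
  | mem x y => simp [Fm.str, varStr, List.count_replicate]
  | imp φ ψ h1 h2 => simp [Fm.str]; omega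
  | all x φ h => simp [Fm.str, varStr, List.count_replicate]; omega

/-- The string of `[c₁ ≐ d₁ → c₂ ∈ d₂]`. -/
def tstr (c₁ d₁ c₂ d₂ : ℕ) : List Alph :=
  (Fm.imp (.eq c₁ d₁) (.mem c₂ d₂)).str

/-- Skeleton: erase the primes. -/
def skel (l : List Alph) : List Alph := l.filter (fun x => decide (x ≠ Alph.prime))

theorem skel_append (l k : List Alph) : skel (l ++ k) = skel l ++ skel k := by
  simp [skel]

theorem skel_pr (n : ℕ) : skel (List.replicate n Alph.prime) = [] := by
  simp [skel]

theorem pr_inj {n k : ℕ} {x y : Alph} {l l' : List Alph} (hx : x ≠ .prime) (hy : y ≠ .prime)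
    (h : pr n ++ x :: l = pr k ++ y :: l') : n = k ∧ l = l' := by
  induction n generalizing k with
  | zero =>
    cases k with
    | zero => simp at h; exact ⟨rfl, h.2⟩
    | succ k => simp [pr, List.replicate_succ] at h; exact absurd h.1 hx
  | succ n ih =>
    cases k with
    | zero => simp [pr, List.replicate_succ] at h; exact absurd h.1.symm hy
    | succ k =>
      simp only [pr, List.replicate_succ, List.cons_append, List.cons.injEq, true_and] at h
      obtain ⟨h1, h2⟩ := ih h
      exact ⟨by omega, h2⟩

theorem str_shape (φ : Fm) (c₁ d₁ c₂ d₂ : ℕ) (h : φ.str = tstr c₁ d₁ c₂ d₂) :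
    φ = Fm.imp (.eq c₁ d₁) (.mem c₂ d₂) := by
  have hsk := congrArg skel h
  have hv : ∀ n, skel (varStr n) = [Alph.w] := by intro n; simp [varStr, skel]
  have key : ∃ a b c d, φ = Fm.imp (.eq a b) (.mem c d) := by
    have e : ∀ x, x ≠ Alph.prime → skel [x] = [x] := by intro x hx; simp [skel, hx]
    simp only [tstr, Fm.str, skel_append, hv] at hsk
    cases φ with
    | bot => simp [Fm.str, skel] at hsk
    | eq x y => simp [Fm.str, skel_append, hv] at hsk; simp [skel] at hsk
    | mem x y => simp [Fm.str, skel_append, hv] at hsk; simp [skel] at hsk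
    | all x φ => 
      rw [Fm.str] at hsk
      simp only [skel_append, hv] at hsk; simp [skel] at hsk
    | imp φ ψ =>
      rw [Fm.str] at hsk
      simp only [skel_append] at hsk
      simp only [skel, List.filter] at hsk
      cases φ with
      | bot => simp [Fm.str] at hsk
      | mem x y => simp [Fm.str, varStr] at hsk
      | imp x y => simp [Fm.str, varStr] at hsk
      | all x y => simp [Fm.str, varStr] at hsk
      | eq x y =>
        cases ψ with
        | bot => simp [Fm.str, varStr] at hsk
        | mem x y => exact ⟨_, _, _, _, rfl⟩
        | imp x y => simp [Fm.str, varStr] at hsk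
        | all x y => simp [Fm.str, varStr] at hsk
        | eq x y => simp [Fm.str, varStr] at hsk
  obtain ⟨a, b, c, d, rfl⟩ := key
  simp only [tstr, Fm.str, varStr, List.append_assoc, List.cons_append, List.nil_append,
    List.cons.injEq, true_and] at h
  obtain ⟨rfl, k1⟩ := pr_inj (by simp) (by simp) h
  simp only [List.cons.injEq, true_and] at k1
  obtain ⟨rfl, k2⟩ := pr_inj (by simp) (by simp) k1
  simp only [List.cons.injEq, true_and] at k2
  obtain ⟨rfl, k3⟩ := pr_inj (by simp) (by simp) k2
  simp only [List.cons.injEq, true_and] at k3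
  obtain ⟨rfl, k4⟩ := pr_inj (by simp) (by simp) k3
  rfl

theorem strat (c₁ d₁ c₂ d₂ : ℕ) (h : c₂ ≠ d₂) (h1 : ¬ (c₁ = c₂ ∧ d₁ = d₂))
    (h2 : ¬ (c₁ = d₂ ∧ d₁ = c₂)) : (Fm.imp (.eq c₁ d₁) (.mem c₂ d₂)).Stratified := by
  refine ⟨fun v => if v = d₂ ∨ ((d₂ = c₁ ∨ d₂ = d₁) ∧ (v = c₁ ∨ v = d₁)) then 1 else 0, ?_, ?_⟩
  · simp only [Fm.memPairs, Finset.empty_union, Finset.mem_singleton]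
    rintro p rfl
    simp only
    rw [if_neg (by grind), if_pos (by grind)]; rfl
  · simp only [Fm.eqPairs, Finset.union_empty, Finset.mem_singleton]
    rintro p rfl
    simp only
    split_ifs <;> grind

theorem unstrat (a b : ℕ) : ¬ (Fm.imp (.eq a b) (.mem a b)).Stratified := by
  rintro ⟨σ, h1, h2⟩
  have h1 := h1 (a, b) (by simp [Fm.memPairs])
  have h2 := h2 (a, b) (by simp [Fm.eqPairs])
  simp only at h1 h2
  omega

/-- Localization of the window. -/
theorem localize {T : Type} {P R S u m m' z : List T} (h : P ++ R ++ S = u ++ m ++ z)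
    (hP : P.length ≤ u.length) (hS : S.length ≤ z.length) (hs : m'.Sublist m) :
    ∃ R', R'.Sublist R ∧ R'.length + m.length = R.length + m'.length ∧
      u ++ m' ++ z = P ++ R' ++ S := by
  have h1 : P <+: u := by
    refine List.prefix_of_prefix_length_le (l₃ := P ++ R ++ S) ⟨R ++ S, by simp⟩
      ⟨m ++ z, by simp [h]⟩ hP
  have h2 : S <:+ z := by
    refine List.suffix_of_suffix_length_le (l₃ := P ++ R ++ S) ⟨P ++ R, by simp⟩
      ⟨u ++ m, by simp [h]⟩ hS
  obtain ⟨u', rfl⟩ := h1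
  obtain ⟨z', rfl⟩ := h2
  have h3 : R = u' ++ m ++ z' := by
    have : P ++ (R ++ S) = P ++ (u' ++ m ++ z' ++ S) := by simpa using h
    exact List.append_cancel_right (List.append_cancel_left this)
  subst h3
  refine ⟨u' ++ m' ++ z', ?_, by simp; omega, by simp⟩
  exact (List.Sublist.append_left hs u').append_right z'

theorem sub_two {x y : Alph} {l : List Alph} (h : l.Sublist [x, y]) :
    l = [] ∨ l = [x] ∨ l = [y] ∨ l = [x, y] := by
  have := List.mem_sublists.2 h
  simp [List.sublists] at this
  tauto

theorem sub_region {n k : ℕ} {C R' : List Alph} (h : R'.Sublist (pr n ++ C ++ pr k)) :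
    ∃ n' k' C', n' ≤ n ∧ k' ≤ k ∧ C'.Sublist C ∧ R' = pr n' ++ C' ++ pr k' := by
  obtain ⟨l, l₃, rfl, h1, h2⟩ := List.sublist_append_iff.1 h
  obtain ⟨l₁, l₂, rfl, h3, h4⟩ := List.sublist_append_iff.1 h1
  obtain ⟨k', hk, rfl⟩ := List.sublist_replicate_iff.1 h2
  obtain ⟨n', hn, rfl⟩ := List.sublist_replicate_iff.1 h3
  exact ⟨n', k', l₂, hn, hk, h4, rfl⟩

/-- The language of unstratified formulae of set theory is not context-free. -/
theorem unstratified_not_contextFree :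
    ¬ Language.IsContextFree {s : List Alph | ∃ φ : Fm, ¬ φ.Stratified ∧ φ.str = s} := by
  intro hL
  obtain ⟨p, hp⟩ := shrinking _ hL
  obtain ⟨a, ha⟩ : ∃ a, a = p + 1 := ⟨_, rfl⟩
  obtain ⟨b, hb⟩ : ∃ b, b = 2 * p + 2 := ⟨_, rfl⟩
  have hlen : (tstr a b a b).length = 2 * a + 2 * b + 9 := by
    simp [tstr, Fm.str, varStr]; omega
  obtain ⟨u, m, m', z, hs, hm, hsub, hlt, φ, hφ, hstr⟩ :=
    hp (tstr a b a b) ⟨_, unstrat a b, rfl⟩ (by omega)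
  have hlen2 : u.length + m.length + z.length = 2 * a + 2 * b + 9 := by
    rw [← hlen, hs]; simp; omega
  -- it suffices to find an explicit description of the shrunk string
  have fin : ∀ c₁ d₁ c₂ d₂ : ℕ, φ.str = tstr c₁ d₁ c₂ d₂ → c₁ ≤ a → d₁ ≤ b → c₂ ≤ a → d₂ ≤ b →
      a + b < d₁ + p + c₁ + 1 → a + b < d₂ + p + c₂ + 1 →
      c₁ + d₁ + c₂ + d₂ < a + b + a + b →
      ((c₁ = a ∧ d₁ = b) ∨ (c₂ = a ∧ d₂ = b) ∨ (c₁ = a ∧ d₂ = b)) → False := by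
    intro c₁ d₁ c₂ d₂ h h1 h2 h3 h4 h5 h6 h7 h8
    have := str_shape _ _ _ _ _ h
    subst this
    refine hφ (strat _ _ _ _ ?_ ?_ ?_) <;> omega
  have hc := str_counts φ
  -- generic treatment of one region
  have reg : ∀ (P S C : List Alph) (n k : ℕ), tstr a b a b = P ++ (pr n ++ C ++ pr k) ++ S →
      P.length ≤ u.length → S.length ≤ z.length →
      ∃ n' k' C', n' ≤ n ∧ k' ≤ k ∧ C'.Sublist C ∧
        n' + C'.length + k' < n + C.length + k ∧
        n + C.length + k ≤ n' + C'.length + k' + p ∧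
        φ.str = P ++ (pr n' ++ C' ++ pr k') ++ S := by
    intro P S C n k h1 h2 h3
    obtain ⟨R', hR, hRl, hRe⟩ := localize (h1.symm.trans hs) h2 h3 hsub
    obtain ⟨n', k', C', hn, hk, hC, rfl⟩ := sub_region hR
    refine ⟨n', k', C', hn, hk, hC, ?_, ?_, hstr.trans hRe⟩ <;>
    · simp at hRl; omega
  by_cases g1 : a + b + b + 7 ≤ z.length
  · obtain ⟨n', k', C', hn, hk, hC, hl1, hl2, he⟩ := reg []
      ([Alph.deq, .w] ++ pr b ++ [.imp, .w] ++ pr a ++ [.mem, .w] ++ pr b ++ [.rb])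
      [.lb, .w] 0 a (by simp [tstr, Fm.str, varStr]) (by simp) (by simp; omega)
    rw [he] at hc
    rcases sub_two hC with rfl | rfl | rfl | rfl
    · simp [List.count_replicate] at hc
    · simp [List.count_replicate] at hc
    · simp [List.count_replicate] at hc
    · simp at hl1 hl2
      refine fin k' b a b (he.trans ?_) ?_ ?_ ?_ ?_ ?_ ?_ ?_ ?_ <;> first | omega | skip
      obtain rfl : n' = 0 := by omega
      simp [tstr, Fm.str, varStr]
  by_cases g2 : a + b + 5 ≤ z.length
  · obtain ⟨n', k', C', hn, hk, hC, hl1, hl2, he⟩ := reg [.lb, .w]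
      ([.imp, .w] ++ pr a ++ [.mem, .w] ++ pr b ++ [.rb])
      [.deq, .w] a b (by simp [tstr, Fm.str, varStr]) (by simp; omega) (by simp; omega)
    rw [he] at hc
    rcases sub_two hC with rfl | rfl | rfl | rfl
    · simp [List.count_replicate] at hc
    · simp [List.count_replicate] at hc
    · simp [List.count_replicate] at hc
    · simp at hl1 hl2
      refine fin n' k' a b (he.trans ?_) ?_ ?_ ?_ ?_ ?_ ?_ ?_ ?_ <;> first | omega | skip
      simp [tstr, Fm.str, varStr]
  by_cases g3 : b + 3 ≤ z.length
  · obtain ⟨n', k', C', hn, hk, hC, hl1, hl2, he⟩ := reg ([.lb, .w] ++ pr a ++ [.deq, .w])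
      ([.mem, .w] ++ pr b ++ [.rb])
      [.imp, .w] b a (by simp [tstr, Fm.str, varStr]) (by simp; omega) (by simp; omega)
    rw [he] at hc
    rcases sub_two hC with rfl | rfl | rfl | rfl
    · simp [List.count_replicate] at hc
    · simp [List.count_replicate] at hc
    · simp [List.count_replicate] at hc
    · simp at hl1 hl2
      refine fin a n' k' b (he.trans ?_) ?_ ?_ ?_ ?_ ?_ ?_ ?_ ?_ <;> first | omega | skip
      simp [tstr, Fm.str, varStr]
  by_cases g4 : 1 ≤ z.length
  · obtain ⟨n', k', C', hn, hk, hC, hl1, hl2, he⟩ := reg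
      ([.lb, .w] ++ pr a ++ [.deq, .w] ++ pr b ++ [.imp, .w])
      [.rb]
      [.mem, .w] a b (by simp [tstr, Fm.str, varStr]) (by simp; omega) (by simp; omega)
    rw [he] at hc
    rcases sub_two hC with rfl | rfl | rfl | rfl
    · simp [List.count_replicate] at hc
    · simp [List.count_replicate] at hc
    · simp [List.count_replicate] at hc
    · simp at hl1 hl2
      refine fin a b n' k' (he.trans ?_) ?_ ?_ ?_ ?_ ?_ ?_ ?_ ?_ <;> first | omega | skip
      simp [tstr, Fm.str, varStr]
  · obtain ⟨n', k', C', hn, hk, hC, hl1, hl2, he⟩ := reg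
      ([.lb, .w] ++ pr a ++ [.deq, .w] ++ pr b ++ [.imp, .w] ++ pr a ++ [.mem, .w])
      []
      [.rb] b 0 (by simp [tstr, Fm.str, varStr]) (by simp; omega) (by simp)
    rw [he] at hc
    have hC' : C' = [] ∨ C' = [Alph.rb] := by
      have := List.mem_sublists.2 hC
      simpa [List.sublists] using this
    rcases hC' with rfl | rfl
    · simp [List.count_replicate] at hc
    · simp at hl1 hl2
      refine fin a b a n' (he.trans ?_) ?_ ?_ ?_ ?_ ?_ ?_ ?_ ?_ <;> first | omega | skip
      obtain rfl : k' = 0 := by omega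
      simp [tstr, Fm.str, varStr]
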